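/- arXiv:2012.06528 — 2 statements merged into one kernel-verified Lean document; each statement's English description precedes it below -/
import Mathlib

section
/- Let Γ be a finite n-player extensive-form game with imperfect information, chance, and perfect recall, and let {β_i}_{i∈N} be a perfect equilibrium (PE) of Γ. Then the product distribution μ ∈ Δ_Π defined by μ(π) := ∏_{i∈N} ∏_{I∈𝓘_i} β_i(π_i(I)) for every strategy profile π ∈ Π is an extensive-form perfect correlated equilibrium (EFPCE) of Γ. In particular, every PE constitutes an EFPCE (PE ⊆ EFPCE), and hence every finite EFG with perfect recall admits an EFPCE. -/
open scoped BigOperators Classical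
open Filter

noncomputable section

/-- A finite `n`-player extensive-form game with imperfect information, chance,
and perfect recall.  Nodes are identified with the list of actions on the path
from the root (so a node `h` is its own action sequence `σ(h)`). -/
structure EFG (n : ℕ) where
  /-- The (global) set of actions. -/
  Action : Type
  [finA : Fintype Action]
  [deqA : DecidableEq Action]
  /-- Information sets (of all players). -/
  Infoset : Type
  [finI : Fintype Infoset]
  [deqI : DecidableEq Infoset]
  /-- The set of histories (nodes), each identified by its action sequence. -/
  H : Finset (List Action)
  root_mem : ([] : List Action) ∈ H
  prefix_closed : ∀ ⦃h : List Action⦄, h ∈ H → ∀ ⦃h' : List Action⦄, h' <+: h → h' ∈ H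
  /-- Actions available at a node (empty iff the node is terminal). -/
  avail : List Action → Finset Action
  child_iff : ∀ h ∈ H, ∀ a : Action, ((h ++ [a]) ∈ H ↔ a ∈ avail h)
  /-- The infoset controlling a nonterminal node; `none` means chance moves. -/
  ctrl : List Action → Option Infoset
  /-- The player owning an infoset. -/
  infPlayer : Infoset → Fin n
  /-- The actions available at an infoset. -/
  infActions : Infoset → Finset Action
  infActions_nonempty : ∀ I : Infoset, (infActions I).Nonempty
  ctrl_actions : ∀ h ∈ H, ∀ I : Infoset, ctrl h = some I → avail h = infActions I
  /-- Action sets of distinct infosets are disjoint. -/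
  infActions_disjoint : ∀ I J : Infoset, I ≠ J → Disjoint (infActions I) (infActions J)
  /-- Probabilities of chance moves. -/
  chanceProb : List Action → Action → ℝ
  chance_pos : ∀ h ∈ H, avail h ≠ ∅ → ctrl h = none → ∀ a ∈ avail h, 0 < chanceProb h a
  chance_sum : ∀ h ∈ H, avail h ≠ ∅ → ctrl h = none → ∑ a ∈ avail h, chanceProb h a = 1
  /-- Utilities of the players over terminal nodes. -/
  util : Fin n → List Action → ℝ
  /-- `ownSeq I` is `σ_i(I)`, the sequence of player `i`'s own actions leading to `I`. -/
  ownSeq : Infoset → List Action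
  /-- Perfect recall: all nodes of an infoset are reached by the same sequence of
  the owning player's actions. -/
  perfect_recall : ∀ I : Infoset, ∀ h ∈ H, ctrl h = some I →
    h.filter (fun a => decide (∃ J : Infoset, infPlayer J = infPlayer I ∧ a ∈ infActions J))
      = ownSeq I

attribute [instance] EFG.finA EFG.deqA EFG.finI EFG.deqI

namespace EFG

variable {n : ℕ}

/-- Pure strategies `Π_i` of player `i`: an action at each of her infosets. -/
abbrev PureStrat (G : EFG n) (i : Fin n) :=
  ∀ J : {J : G.Infoset // G.infPlayer J = i}, {a : G.Action // a ∈ G.infActions J.1}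

/-- Pure strategy profiles `Π`. -/
abbrev Profile (G : EFG n) := ∀ i : Fin n, G.PureStrat i

/-- Terminal nodes `Z`. -/
def terminalSet (G : EFG n) : Finset (List G.Action) := G.H.filter (fun h => G.avail h = ∅)

/-- `μ ∈ Δ_Π`. -/
def IsDistribution (G : EFG n) (μ : G.Profile → ℝ) : Prop :=
  (∀ π, 0 ≤ μ π) ∧ ∑ π : G.Profile, μ π = 1

/-- `h` is a node belonging to the infoset `I`. -/
def InfNode (G : EFG n) (I : G.Infoset) (h : List G.Action) : Prop :=
  h ∈ G.H ∧ G.ctrl h = some I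

/-- `I ≺ J` : some node of `J` is a (strict) descendant of some node of `I`. -/
def infLt (G : EFG n) (I J : G.Infoset) : Prop :=
  ∃ h k, G.InfNode I h ∧ G.InfNode J k ∧ h <+: k ∧ h ≠ k

/-- `I ⪯ J`. -/
def infLe (G : EFG n) (I J : G.Infoset) : Prop := I = J ∨ G.infLt I J

/-- Behavior strategy profiles: `β i a` is the probability with which player `i`
plays action `a` (at the unique infoset where `a` is available). -/
def IsBehavior (G : EFG n) (β : Fin n → G.Action → ℝ) : Prop :=
  (∀ i a, 0 ≤ β i a ∧ β i a ≤ 1) ∧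
  ∀ I : G.Infoset, ∑ a ∈ G.infActions I, β (G.infPlayer I) a = 1

/-- Probability of traversing the path `rest` starting from node `pre`
when players play the behavior profile `β` and chance plays its fixed probabilities. -/
def reachAux (G : EFG n) (β : Fin n → G.Action → ℝ) :
    List G.Action → List G.Action → ℝ
  | _, [] => 1
  | pre, a :: rest =>
    (match G.ctrl pre with
     | some I => β (G.infPlayer I) a
     | none => G.chanceProb pre a) * reachAux G β (pre ++ [a]) rest

/-- Probability of reaching node `z` under behavior profile `β`. -/
def reach (G : EFG n) (β : Fin n → G.Action → ℝ) (z : List G.Action) : ℝ :=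
  G.reachAux β [] z

/-- Expected utility of player `i` under behavior profile `β`. -/
def EU (G : EFG n) (i : Fin n) (β : Fin n → G.Action → ℝ) : ℝ :=
  ∑ z ∈ G.terminalSet, G.reach β z * G.util i z

/-- Nash equilibrium in behavior strategies. -/
def IsNE (G : EFG n) (β : Fin n → G.Action → ℝ) : Prop :=
  G.IsBehavior β ∧ ∀ (i : Fin n) (βi : G.Action → ℝ),
    G.IsBehavior (Function.update β i βi) →
    G.EU i (Function.update β i βi) ≤ G.EU i β

/-- A valid lower-bound (tremble) function `η`. -/
def IsLowerBound (G : EFG n) (η : G.Action → ℝ) : Prop :=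
  (∀ a, 0 < η a ∧ η a < 1) ∧ ∀ I : G.Infoset, ∑ a ∈ G.infActions I, η a < 1

/-- `β` respects the lower bounds `η` of a perturbed game. -/
def Respects (G : EFG n) (η : G.Action → ℝ) (β : Fin n → G.Action → ℝ) : Prop :=
  ∀ I : G.Infoset, ∀ a ∈ G.infActions I, η a ≤ β (G.infPlayer I) a

/-- Nash equilibrium of the perturbed game `(Γ, η)`. -/
def IsPertNE (G : EFG n) (η : G.Action → ℝ) (β : Fin n → G.Action → ℝ) : Prop :=
  G.IsBehavior β ∧ G.Respects η β ∧
  ∀ (i : Fin n) (βi : G.Action → ℝ),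
    G.IsBehavior (Function.update β i βi) → G.Respects η (Function.update β i βi) →
    G.EU i (Function.update β i βi) ≤ G.EU i β

/-- Perfect equilibrium (Selten): a limit point of NEs of perturbed games with
vanishing trembles. -/
def IsPE (G : EFG n) (β : Fin n → G.Action → ℝ) : Prop :=
  ∃ η : ℕ → G.Action → ℝ, (∀ t, G.IsLowerBound (η t)) ∧
    (∀ a, Tendsto (fun t => η t a) atTop (nhds 0)) ∧
    ∃ βs : ℕ → (Fin n → G.Action → ℝ), (∀ t, G.IsPertNE (η t) (βs t)) ∧
      MapClusterPt β atTop βs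

/-! ### The extended game `Γ^ext(μ)` -/

/-- The information available at infoset `I` of the extended game (besides `I`
itself): the recommendations received at all own infosets `J ⪯ I`. -/
abbrev RecInfo (G : EFG n) (I : G.Infoset) :=
  ∀ J : {J : G.Infoset // G.infPlayer J = G.infPlayer I ∧ G.infLe J I},
    {a : G.Action // a ∈ G.infActions J.1}

/-- A behavior strategy of player `i` in the extended game: a distribution over
actions at each infoset of the extended game. -/
abbrev ExtBehavior (G : EFG n) (i : Fin n) :=
  ∀ I : {I : G.Infoset // G.infPlayer I = i}, G.RecInfo I.1 → G.Action → ℝ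

/-- The recommendation information at `I` induced by the recommended profile `π`. -/
def recOf (G : EFG n) (π : G.Profile) (I : G.Infoset) : G.RecInfo I :=
  fun J => π (G.infPlayer I) ⟨J.1, J.2.1⟩

/-- Validity of a behavior strategy profile of the extended game. -/
def IsExtBehavior (G : EFG n) (δ : ∀ i, G.ExtBehavior i) : Prop :=
  ∀ (i : Fin n) (I : {I : G.Infoset // G.infPlayer I = i}) (r : G.RecInfo I.1),
    (∀ a, 0 ≤ δ i I r a) ∧ (∑ a ∈ G.infActions I.1, δ i I r a = 1) ∧
    (∀ a, a ∉ G.infActions I.1 → δ i I r a = 0)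

/-- Probability of traversing `rest` from `pre` in the extended game when the
profile `π` has been recommended and players play `δ`. -/
def extReachAux (G : EFG n) (δ : ∀ i, G.ExtBehavior i) (π : G.Profile) :
    List G.Action → List G.Action → ℝ
  | _, [] => 1
  | pre, a :: rest =>
    (match G.ctrl pre with
     | some I => δ (G.infPlayer I) ⟨I, rfl⟩ (G.recOf π I) a
     | none => G.chanceProb pre a) * extReachAux G δ π (pre ++ [a]) rest

/-- Expected utility of player `i` in the extended game `Γ^ext(μ)` under the
behavior strategy profile `δ`. -/
def extEU (G : EFG n) (μ : G.Profile → ℝ) (i : Fin n) (δ : ∀ i, G.ExtBehavior i) : ℝ :=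
  ∑ π : G.Profile, μ π * ∑ z ∈ G.terminalSet, G.extReachAux δ π [] z * G.util i z

/-- `δ` is a Nash equilibrium of the extended game `Γ^ext(μ)`. -/
def ExtIsNE (G : EFG n) (μ : G.Profile → ℝ) (δ : ∀ i, G.ExtBehavior i) : Prop :=
  G.IsExtBehavior δ ∧ ∀ (i : Fin n) (δi : G.ExtBehavior i),
    G.IsExtBehavior (Function.update δ i δi) →
    G.extEU μ i (Function.update δ i δi) ≤ G.extEU μ i δ

/-- The "follow recommendations" strategy profile of the extended game. -/
def followRec (G : EFG n) : ∀ i, G.ExtBehavior i :=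
  fun _ I r a => if a = (r ⟨I.1, rfl, Or.inl rfl⟩).1 then 1 else 0

/-- `η̃(a)`: the maximum probability assignable to `a` at infoset `I` given `η`. -/
def resProb (G : EFG n) (η : G.Action → ℝ) (I : G.Infoset) (a : G.Action) : ℝ :=
  1 - ∑ a' ∈ (G.infActions I).erase a, η a'

/-- Following recommendations in the perturbed extended game `(Γ^ext(μ), η)`:
the recommended action gets all the residual probability, every other action
its lower bound. -/
def followRecPert (G : EFG n) (η : G.Action → ℝ) : ∀ i, G.ExtBehavior i :=
  fun _ I r a =>
    if a ∈ G.infActions I.1 then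
      (if a = (r ⟨I.1, rfl, Or.inl rfl⟩).1 then G.resProb η I.1 a else η a)
    else 0

/-- `δ` respects the lower bounds `η` in the extended game. -/
def ExtRespects (G : EFG n) (η : G.Action → ℝ) (δ : ∀ i, G.ExtBehavior i) : Prop :=
  ∀ (i : Fin n) (I : {I : G.Infoset // G.infPlayer I = i}) (r : G.RecInfo I.1),
    ∀ a ∈ G.infActions I.1, η a ≤ δ i I r a

/-- `δ` is a Nash equilibrium of the perturbed extended game `(Γ^ext(μ), η)`. -/
def ExtIsPertNE (G : EFG n) (μ : G.Profile → ℝ) (η : G.Action → ℝ)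
    (δ : ∀ i, G.ExtBehavior i) : Prop :=
  G.IsExtBehavior δ ∧ G.ExtRespects η δ ∧
  ∀ (i : Fin n) (δi : G.ExtBehavior i),
    G.IsExtBehavior (Function.update δ i δi) → G.ExtRespects η (Function.update δ i δi) →
    G.extEU μ i (Function.update δ i δi) ≤ G.extEU μ i δ

/-- Following recommendations is a perfect equilibrium of `Γ^ext(μ)`. -/
def FollowIsPE (G : EFG n) (μ : G.Profile → ℝ) : Prop :=
  ∃ η : ℕ → G.Action → ℝ, (∀ t, G.IsLowerBound (η t)) ∧
    (∀ a, Tendsto (fun t => η t a) atTop (nhds 0)) ∧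
    ∃ δs : ℕ → ∀ i, G.ExtBehavior i, (∀ t, G.ExtIsPertNE μ (η t) (δs t)) ∧
      MapClusterPt G.followRec atTop δs

/-- Extensive-form correlated equilibrium: following recommendations is an NE of
`Γ^ext(μ)`. -/
def IsEFCE (G : EFG n) (μ : G.Profile → ℝ) : Prop :=
  G.IsDistribution μ ∧ G.ExtIsNE μ G.followRec

/-- Extensive-form perfect correlated equilibrium: following recommendations is
a PE of `Γ^ext(μ)`. -/
def IsEFPCE (G : EFG n) (μ : G.Profile → ℝ) : Prop :=
  G.IsDistribution μ ∧ G.FollowIsPE μ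

/-- The product distribution on `Π` induced by a behavior profile `β`:
`μ(π) = ∏_i ∏_{I ∈ 𝓘_i} β_i(π_i(I))`. -/
def prodDist (G : EFG n) (β : Fin n → G.Action → ℝ) : G.Profile → ℝ :=
  fun π => ∏ i : Fin n, ∏ J : {J : G.Infoset // G.infPlayer J = i}, β i (π i J).1

/-! ### Trigger agents, `ξ^η`, and related sets -/

/-- `Z(I)`: terminal nodes reachable from infoset `I`. -/
def ZI (G : EFG n) (I : G.Infoset) : Finset (List G.Action) :=
  G.terminalSet.filter (fun z => ∃ h, G.InfNode I h ∧ h <+: z)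

/-- `Z(I,a)`: terminal nodes reachable by playing `a` at `I`. -/
def ZIa (G : EFG n) (I : G.Infoset) (a : G.Action) : Finset (List G.Action) :=
  G.terminalSet.filter (fun z => ∃ h, G.InfNode I h ∧ (h ++ [a]) <+: z)

/-- `K ∈ 𝓒(I,a)`: `K` immediately follows `I` when playing `a` (no other infoset
of the same player in between). -/
def ImmSucc (G : EFG n) (I : G.Infoset) (a : G.Action) (K : G.Infoset) : Prop :=
  G.infPlayer K = G.infPlayer I ∧
  ∃ h k, G.InfNode I h ∧ G.InfNode K k ∧ (h ++ [a]) <+: k ∧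
    ∀ h' : List G.Action, (h ++ [a]) <+: h' → h' <+: k → h' ≠ k →
      ∀ J : G.Infoset, G.infPlayer J = G.infPlayer I → ¬ G.InfNode J h'

/-- `Z⊥(I,a)`: terminal nodes reachable by playing `a` at `I` without traversing
any further infoset of the same player. -/
def Zbot (G : EFG n) (I : G.Infoset) (a : G.Action) : Finset (List G.Action) :=
  (G.ZIa I a).filter (fun z => ¬ ∃ K, G.ImmSucc I a K ∧ z ∈ G.ZI K)

/-- `π_i ∈ Π_i(a)`: the pure strategy `πi` prescribes action `a`. -/
def Prescribes (G : EFG n) {i : Fin n} (πi : G.PureStrat i) (a : G.Action) : Prop :=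
  ∃ J, (πi J).1 = a

/-- `π_i ∈ Π_i(z)`: `πi` plays so as to reach the node `z`. -/
def PlaysToNode (G : EFG n) {i : Fin n} (πi : G.PureStrat i) (z : List G.Action) : Prop :=
  ∀ (k : List G.Action) (a : G.Action) (J : G.Infoset) (hJ : G.infPlayer J = i),
    G.ctrl k = some J → (k ++ [a]) <+: z → (πi ⟨J, hJ⟩).1 = a

/-- `π_i ∈ Π_i(I)`: `πi` plays so as to reach the infoset `I` whenever possible. -/
def PlaysToInf (G : EFG n) {i : Fin n} (πi : G.PureStrat i) (I : G.Infoset) : Prop :=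
  ∀ h, G.InfNode I h → G.PlaysToNode πi h

/-- A distribution `μ̂_i ∈ Δ_{Π_i(I)}`. -/
def IsDistOn (G : EFG n) {i : Fin n} (μhat : G.PureStrat i → ℝ) (I : G.Infoset) : Prop :=
  (∀ πi, 0 ≤ μhat πi) ∧ (∑ πi : G.PureStrat i, μhat πi = 1) ∧
  ∀ πi, ¬ G.PlaysToInf πi I → μhat πi = 0

/-- `p_c(z)`: product of chance probabilities on the path to `z`. -/
def pcAux (G : EFG n) : List G.Action → List G.Action → ℝ
  | _, [] => 1
  | pre, a :: rest =>
    (match G.ctrl pre with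
     | some _ => 1
     | none => G.chanceProb pre a) * pcAux G (pre ++ [a]) rest

def pc (G : EFG n) (z : List G.Action) : ℝ := G.pcAux [] z

/-- Auxiliary for `ξ^η(z, π)`. -/
def xiFullAux (G : EFG n) (η : G.Action → ℝ) (π : G.Profile) :
    List G.Action → List G.Action → ℝ
  | _, [] => 1
  | pre, a :: rest =>
    (match G.ctrl pre with
     | some J =>
       if ((π (G.infPlayer J)) ⟨J, rfl⟩).1 = a then G.resProb η J a else η a
     | none => G.chanceProb pre a) * xiFullAux G η π (pre ++ [a]) rest

/-- `ξ^η(z, π)`: probability of reaching `z` when `π` is recommended and all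
players obey, with trembles `η`. -/
def xiFull (G : EFG n) (η : G.Action → ℝ) (π : G.Profile) (z : List G.Action) : ℝ :=
  G.xiFullAux η π [] z

/-- Auxiliary for `ξ^η(z, I, π)`. -/
def xiFromAux (G : EFG n) (η : G.Action → ℝ) (i : Fin n) (I : G.Infoset) (π : G.Profile) :
    List G.Action → List G.Action → ℝ
  | _, [] => 1
  | pre, a :: rest =>
    (match G.ctrl pre with
     | some J =>
       if G.infPlayer J = i ∧ (∃ h, G.InfNode I h ∧ h <+: pre) then 1
       else if ((π (G.infPlayer J)) ⟨J, rfl⟩).1 = a then G.resProb η J a else η a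
     | none => G.chanceProb pre a) * xiFromAux G η i I π (pre ++ [a]) rest

/-- `ξ^η(z, I, π)`: as `ξ^η(z, π)`, excluding player `i`'s actions leading from
`I` to `z`. -/
def xiFrom (G : EFG n) (η : G.Action → ℝ) (i : Fin n) (I : G.Infoset) (π : G.Profile)
    (z : List G.Action) : ℝ :=
  G.xiFromAux η i I π [] z

/-- Auxiliary for `ξ^η(z, π̂_i)` (only player `i`'s actions from `I` to `z`). -/
def xiOwnAux (G : EFG n) (η : G.Action → ℝ) (i : Fin n) (I : G.Infoset)
    (πi : G.PureStrat i) : List G.Action → List G.Action → ℝ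
  | _, [] => 1
  | pre, a :: rest =>
    (match G.ctrl pre with
     | some J =>
       if hJ : G.infPlayer J = i ∧ (∃ h, G.InfNode I h ∧ h <+: pre) then
         (if (πi ⟨J, hJ.1⟩).1 = a then G.resProb η J a else η a)
       else 1
     | none => 1) * xiOwnAux G η i I πi (pre ++ [a]) rest

/-- `ξ^η(z, π̂_i)` for `π̂_i ∈ Π_i(I)`: product over player `i`'s actions from
`I` to `z`. -/
def xiOwn (G : EFG n) (η : G.Action → ℝ) (i : Fin n) (I : G.Infoset)
    (πi : G.PureStrat i) (z : List G.Action) : ℝ :=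
  G.xiOwnAux η i I πi [] z

/-- `p^{η,I,a}_{μ,μ̂_i}(z)`: probability of reaching `z ∈ Z(I)` when the
`(I,a,μ̂_i)`-trigger agent gets triggered, in the perturbed extended game. -/
def pTrig (G : EFG n) (η : G.Action → ℝ) (μ : G.Profile → ℝ) (i : Fin n)
    (I : G.Infoset) (a : G.Action) (μhat : G.PureStrat i → ℝ) (z : List G.Action) : ℝ :=
  (∑ π : G.Profile, if G.Prescribes (π i) a then G.xiFrom η i I π z * μ π else 0) *
  (∑ πi : G.PureStrat i, if G.PlaysToInf πi I then G.xiOwn η i I πi z * μhat πi else 0)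

end EFG

namespace EFG

variable {n : ℕ}

/-! ### Factorization of reach probabilities over infosets -/

/-- The contribution of the infoset `I` to the probability of traversing `rest`
from `pre`, when action `a` is played at `I` with probability `w a`. -/
def infFactor (G : EFG n) (I : G.Infoset) (w : G.Action → ℝ) :
    List G.Action → List G.Action → ℝ
  | _, [] => 1
  | pre, a :: rest =>
    (if G.ctrl pre = some I then w a else 1) * infFactor G I w (pre ++ [a]) rest

/-- The recommendations of the pure strategy `πi` that are available at `I`. -/
def ownRec (G : EFG n) {i : Fin n} (πi : G.PureStrat i)
    (I : {I : G.Infoset // G.infPlayer I = i}) : G.RecInfo I.1 :=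
  fun J => πi ⟨J.1, J.2.1.trans I.2⟩

/-- The probability of the pure strategy `πi` when actions are drawn independently
according to `p` at every infoset. -/
def pureWeight (G : EFG n) {i : Fin n} (p : G.Action → ℝ) (πi : G.PureStrat i) : ℝ :=
  ∏ J : {J : G.Infoset // G.infPlayer J = i}, p (πi J).1

lemma reachAux_eq_prod (G : EFG n) (β : Fin n → G.Action → ℝ) (pre rest : List G.Action) :
    G.reachAux β pre rest =
      G.pcAux pre rest * ∏ I, G.infFactor I (β (G.infPlayer I)) pre rest := by
  induction rest generalizing pre with
  | nil => simp [reachAux, pcAux, infFactor]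
  | cons a rest ih =>
    simp only [reachAux, pcAux, infFactor, ih, Finset.prod_mul_distrib]
    cases hc : G.ctrl pre with
    | none => simp; ring
    | some I => simp; ring

lemma extReachAux_eq_prod (G : EFG n) (δ : ∀ i, G.ExtBehavior i) (π : G.Profile)
    (pre rest : List G.Action) :
    G.extReachAux δ π pre rest =
      G.pcAux pre rest *
        ∏ I, G.infFactor I (δ (G.infPlayer I) ⟨I, rfl⟩ (G.recOf π I)) pre rest := by
  induction rest generalizing pre with
  | nil => simp [extReachAux, pcAux, infFactor]
  | cons a rest ih =>
    simp only [extReachAux, pcAux, infFactor, ih, Finset.prod_mul_distrib]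
    cases hc : G.ctrl pre with
    | none => simp; ring
    | some I => simp; ring

lemma prod_infoset_eq (G : EFG n)
    (f : ∀ j : Fin n, {J : G.Infoset // G.infPlayer J = j} → ℝ) :
    ∏ I, f (G.infPlayer I) ⟨I, rfl⟩ = ∏ j, ∏ J, f j J := by
  rw [← Fintype.prod_fiberwise G.infPlayer]
  refine Finset.prod_congr rfl fun j _ => Finset.prod_congr rfl ?_
  rintro ⟨J, rfl⟩ _
  rfl

lemma reach_eq_prod (G : EFG n) (β : Fin n → G.Action → ℝ) (z : List G.Action) :
    G.reach β z = G.pc z *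
      ∏ j, ∏ J : {J : G.Infoset // G.infPlayer J = j}, G.infFactor J.1 (β j) [] z := by
  rw [reach, reachAux_eq_prod, pc,
    ← G.prod_infoset_eq fun j J => G.infFactor J.1 (β j) [] z]

lemma sum_prodDist_mul_extReachAux (G : EFG n) (β : Fin n → G.Action → ℝ)
    (δ : ∀ i, G.ExtBehavior i) (z : List G.Action) :
    ∑ π, G.prodDist β π * G.extReachAux δ π [] z =
      G.pc z * ∏ j, ∑ πj : G.PureStrat j, G.pureWeight (β j) πj *
        ∏ J, G.infFactor J.1 (δ j J (G.ownRec πj J)) [] z := by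
  rw [Fintype.prod_sum, Finset.mul_sum]
  refine Finset.sum_congr rfl fun π _ => ?_
  rw [extReachAux_eq_prod, Finset.prod_mul_distrib,
    ← G.prod_infoset_eq fun j J => G.infFactor J.1 (δ j J (G.ownRec (π j) J)) [] z]
  simp only [prodDist, pureWeight, pc, mul_left_comm]
  rfl

/-! ### Perfect recall rules out revisiting an infoset -/

lemma ctrl_ne_of_infNode (G : EFG n) {I : G.Infoset} {h rest : List G.Action} {a : G.Action}
    (hI : G.ctrl h = some I) (hH : h ++ a :: rest ∈ G.H) :
    G.ctrl (h ++ a :: rest) ≠ some I := by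
  intro hI'
  have hh : h ∈ G.H := G.prefix_closed hH (List.prefix_append _ _)
  have ha : a ∈ G.infActions I := by
    rw [← G.ctrl_actions h hh I hI, ← G.child_iff h hh]
    exact G.prefix_closed hH ⟨rest, by simp⟩
  have key := (G.perfect_recall I _ hH hI').trans (G.perfect_recall I h hh hI).symm
  have hlen := congrArg List.length key
  rw [List.filter_append, List.filter_cons_of_pos
    (by simpa using ⟨I, rfl, ha⟩)] at hlen
  simp at hlen

lemma infFactor_eq_one (G : EFG n) (I : G.Infoset) (w : G.Action → ℝ)
    (pre rest : List G.Action) (h : ∀ l, l <+: rest → G.ctrl (pre ++ l) ≠ some I) :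
    G.infFactor I w pre rest = 1 := by
  induction rest generalizing pre with
  | nil => rfl
  | cons a rest ih =>
    have h0 : G.ctrl pre ≠ some I := by simpa using h [] List.nil_prefix
    rw [infFactor, if_neg h0, one_mul]
    refine ih _ fun l hl => ?_
    simpa using h (a :: l) (by simpa using hl)

lemma infFactor_eq_one_or_apply (G : EFG n) (I : G.Infoset) (pre rest : List G.Action)
    (hH : pre ++ rest ∈ G.H) :
    (∀ w, G.infFactor I w pre rest = 1) ∨
      ∃ a ∈ G.infActions I, ∀ w, G.infFactor I w pre rest = w a := by
  induction rest generalizing pre with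
  | nil => exact Or.inl fun _ => rfl
  | cons a rest ih =>
    by_cases hc : G.ctrl pre = some I
    · right
      have hpre : pre ∈ G.H := G.prefix_closed hH (List.prefix_append _ _)
      refine ⟨a, ?_, fun w => ?_⟩
      · rw [← G.ctrl_actions pre hpre I hc, ← G.child_iff pre hpre]
        exact G.prefix_closed hH ⟨rest, by simp⟩
      · rw [infFactor, if_pos hc, infFactor_eq_one, mul_one]
        intro l hl
        have hl' : pre ++ a :: l ∈ G.H := by
          refine G.prefix_closed hH ?_
          simpa [List.prefix_append_right_inj] using hl
        simpa using G.ctrl_ne_of_infNode hc hl'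
    · simpa only [infFactor, if_neg hc, one_mul] using ih (pre ++ [a]) (by simpa using hH)

lemma infFactor_congr (G : EFG n) (I : G.Infoset) {z : List G.Action} (hz : z ∈ G.H)
    {w w' : G.Action → ℝ} (h : ∀ a ∈ G.infActions I, w a = w' a) :
    G.infFactor I w [] z = G.infFactor I w' [] z := by
  obtain h1 | ⟨a, ha, h1⟩ := G.infFactor_eq_one_or_apply I [] z hz
  · rw [h1, h1]
  · rw [h1, h1, h a ha]

lemma sum_mul_infFactor (G : EFG n) (I : G.Infoset) {z : List G.Action} (hz : z ∈ G.H)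
    {p q : G.Action → ℝ} (κ : {a // a ∈ G.infActions I} → G.Action → ℝ)
    (hp : ∑ a ∈ G.infActions I, p a = 1)
    (hq : ∀ a ∈ G.infActions I, ∑ b : {a // a ∈ G.infActions I}, p b.1 * κ b a = q a) :
    ∑ b : {a // a ∈ G.infActions I}, p b.1 * G.infFactor I (κ b) [] z =
      G.infFactor I q [] z := by
  obtain h1 | ⟨a, ha, h1⟩ := G.infFactor_eq_one_or_apply I [] z hz
  · simp only [h1, mul_one]
    rw [← hp]
    exact Finset.sum_coe_sort _ p
  · simp only [h1]
    exact hq a ha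

lemma sum_pureWeight (G : EFG n) {β : Fin n → G.Action → ℝ} (hβ : G.IsBehavior β)
    (i : Fin n) : ∑ πi : G.PureStrat i, G.pureWeight (β i) πi = 1 := by
  simp only [pureWeight]
  rw [← Fintype.prod_sum fun (J : {J : G.Infoset // G.infPlayer J = i})
    (b : {a // a ∈ G.infActions J.1}) => β i b.1]
  refine Finset.prod_eq_one ?_
  rintro ⟨J, rfl⟩ _
  rw [← hβ.2 J]
  exact Finset.sum_coe_sort _ (β (G.infPlayer J))

lemma pureWeight_nonneg (G : EFG n) {β : Fin n → G.Action → ℝ} (hβ : G.IsBehavior β)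
    {i : Fin n} (πi : G.PureStrat i) : 0 ≤ G.pureWeight (β i) πi :=
  Finset.prod_nonneg fun _ _ => (hβ.1 _ _).1

lemma isDistribution_prodDist (G : EFG n) {β : Fin n → G.Action → ℝ} (hβ : G.IsBehavior β) :
    G.IsDistribution (G.prodDist β) := by
  refine ⟨fun π => Finset.prod_nonneg fun i _ => G.pureWeight_nonneg hβ (π i), ?_⟩
  have h := Fintype.prod_sum fun (i : Fin n) (πi : G.PureStrat i) => G.pureWeight (β i) πi
  simp only [G.sum_pureWeight hβ, Finset.prod_const_one] at h
  exact h.symm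

/-! ### A profile of the extended game that induces a given behavior profile -/

/-- The profile of the extended game that follows the recommendation at `I` with
weight `c I` and corrects it so that, when recommendations are drawn according to `β`,
the induced play is `β'`. -/
def blendRec (G : EFG n) (β β' : Fin n → G.Action → ℝ) (c : G.Infoset → ℝ) :
    ∀ i, G.ExtBehavior i :=
  fun i I r a =>
    if a ∈ G.infActions I.1 then
      c I.1 * (if a = (r ⟨I.1, rfl, Or.inl rfl⟩).1 then 1 else 0) + (β' i a - c I.1 * β i a)
    else 0

lemma sum_pureWeight_mul_blendRec (G : EFG n) {β : Fin n → G.Action → ℝ}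
    (hβ : G.IsBehavior β) (β' : Fin n → G.Action → ℝ) (c : G.Infoset → ℝ) (j : Fin n)
    {z : List G.Action} (hz : z ∈ G.H) :
    ∑ πj : G.PureStrat j, G.pureWeight (β j) πj *
        ∏ J, G.infFactor J.1 (G.blendRec β β' c j J (G.ownRec πj J)) [] z =
      ∏ J : {J : G.Infoset // G.infPlayer J = j}, G.infFactor J.1 (β' j) [] z := by
  let κ : ∀ J : {J : G.Infoset // G.infPlayer J = j}, {a // a ∈ G.infActions J.1} →
      G.Action → ℝ := fun J b a =>
    if a ∈ G.infActions J.1 then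
      c J.1 * (if a = b.1 then 1 else 0) + (β' j a - c J.1 * β j a) else 0
  have hκ : ∀ J : {J : G.Infoset // G.infPlayer J = j},
      ∑ b : {a // a ∈ G.infActions J.1}, β j b.1 * G.infFactor J.1 (κ J b) [] z =
        G.infFactor J.1 (β' j) [] z := by
    rintro ⟨J, rfl⟩
    refine G.sum_mul_infFactor J hz _ (hβ.2 J) fun a ha => ?_
    have hsum := hβ.2 J
    rw [← Finset.sum_coe_sort] at hsum
    have hsel : ∑ b : {a // a ∈ G.infActions J},
        β (G.infPlayer J) b.1 * (if a = b.1 then 1 else 0) = β (G.infPlayer J) a := by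
      rw [Finset.sum_coe_sort (G.infActions J)
        fun b => β (G.infPlayer J) b * (if a = b then 1 else 0)]
      simp [ha]
    simp only [κ, if_pos ha, mul_add, Finset.sum_add_distrib, ← Finset.sum_mul, hsum,
      mul_left_comm _ (c J), ← Finset.mul_sum, hsel]
    ring
  rw [← Finset.prod_congr rfl fun J _ => hκ J, Fintype.prod_sum]
  refine Finset.sum_congr rfl fun πj _ => ?_
  rw [Finset.prod_mul_distrib]
  rfl

lemma extEU_blendRec (G : EFG n) {β : Fin n → G.Action → ℝ} (hβ : G.IsBehavior β)
    (β' : Fin n → G.Action → ℝ) (c : G.Infoset → ℝ) (i : Fin n) :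
    G.extEU (G.prodDist β) i (G.blendRec β β' c) = G.EU i β' := by
  simp only [extEU, EU, Finset.mul_sum, ← mul_assoc]
  rw [Finset.sum_comm]
  refine Finset.sum_congr rfl fun z hz => ?_
  have hzH : z ∈ G.H := (Finset.mem_filter.1 hz).1
  rw [← Finset.sum_mul, sum_prodDist_mul_extReachAux, reach_eq_prod]
  simp only [G.sum_pureWeight_mul_blendRec hβ β' c _ hzH]

/-! ### Unilateral deviations -/

/-- The behavior strategy of `Γ` played by a player who uses `δi` in the extended game
after the pure strategy `πi` has been recommended to her. -/
def inducedStrat (G : EFG n) {i : Fin n} (δi : G.ExtBehavior i) (πi : G.PureStrat i) :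
    G.Action → ℝ :=
  fun a => ∑ J, δi J (G.ownRec πi J) a

lemma inducedStrat_apply (G : EFG n) {i : Fin n} {δi : G.ExtBehavior i}
    (hδi : ∀ I r a, a ∉ G.infActions I.1 → δi I r a = 0) (πi : G.PureStrat i)
    (I : {I : G.Infoset // G.infPlayer I = i}) {a : G.Action} (ha : a ∈ G.infActions I.1) :
    G.inducedStrat δi πi a = δi I (G.ownRec πi I) a := by
  refine Fintype.sum_eq_single I fun J hJ => hδi _ _ _ fun haJ => ?_
  exact Finset.disjoint_left.1
    (G.infActions_disjoint J.1 I.1 fun h => hJ (Subtype.ext h)) haJ ha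

lemma extEU_update_blendRec (G : EFG n) {β : Fin n → G.Action → ℝ} (hβ : G.IsBehavior β)
    (β' : Fin n → G.Action → ℝ) (c : G.Infoset → ℝ) (i : Fin n) {δi : G.ExtBehavior i}
    (hδi : ∀ I r a, a ∉ G.infActions I.1 → δi I r a = 0) :
    G.extEU (G.prodDist β) i (Function.update (G.blendRec β β' c) i δi) =
      ∑ πi : G.PureStrat i, G.pureWeight (β i) πi *
        G.EU i (Function.update β' i (G.inducedStrat δi πi)) := by
  simp only [extEU, EU, Finset.mul_sum, ← mul_assoc]
  rw [Finset.sum_comm, Finset.sum_comm (s := Finset.univ) (t := G.terminalSet)]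
  refine Finset.sum_congr rfl fun z hz => ?_
  have hzH : z ∈ G.H := (Finset.mem_filter.1 hz).1
  rw [← Finset.sum_mul, ← Finset.sum_mul, sum_prodDist_mul_extReachAux]
  congr 1
  rw [← Finset.mul_prod_erase _ _ (Finset.mem_univ i), Finset.sum_mul, Finset.mul_sum]
  refine Finset.sum_congr rfl fun πi _ => ?_
  rw [reach_eq_prod, ← Finset.mul_prod_erase _ _ (Finset.mem_univ i)]
  have hi : ∏ J : {J : G.Infoset // G.infPlayer J = i},
      G.infFactor J.1 (Function.update β' i (G.inducedStrat δi πi) i) [] z =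
      ∏ J, G.infFactor J.1
        (Function.update (G.blendRec β β' c) i δi i J (G.ownRec πi J)) [] z := by
    simp only [Function.update_self]
    exact Finset.prod_congr rfl fun J _ =>
      G.infFactor_congr _ hzH fun a ha => G.inducedStrat_apply hδi πi J ha
  have hne : ∀ j ∈ Finset.univ.erase i,
      ∏ J : {J : G.Infoset // G.infPlayer J = j},
        G.infFactor J.1 (Function.update β' i (G.inducedStrat δi πi) j) [] z =
      ∑ πj : G.PureStrat j, G.pureWeight (β j) πj * ∏ J, G.infFactor J.1
        (Function.update (G.blendRec β β' c) i δi j J (G.ownRec πj J)) [] z := by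
    intro j hj
    simp only [Function.update_of_ne (Finset.ne_of_mem_erase hj)]
    exact (G.sum_pureWeight_mul_blendRec hβ β' c j hzH).symm
  rw [hi, Finset.prod_congr rfl hne]
  ring

lemma isBehavior_update_inducedStrat (G : EFG n) {β' : Fin n → G.Action → ℝ}
    (hβ' : G.IsBehavior β') {i : Fin n} {δi : G.ExtBehavior i}
    (hδi : ∀ (I : {I : G.Infoset // G.infPlayer I = i}) (r : G.RecInfo I.1),
      (∀ a, 0 ≤ δi I r a) ∧ (∑ a ∈ G.infActions I.1, δi I r a = 1) ∧
      (∀ a, a ∉ G.infActions I.1 → δi I r a = 0)) (πi : G.PureStrat i) :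
    G.IsBehavior (Function.update β' i (G.inducedStrat δi πi)) := by
  have happ := G.inducedStrat_apply (fun I r => (hδi I r).2.2) πi
  constructor
  · intro j a
    obtain rfl | hj := eq_or_ne j i
    · rw [Function.update_self]
      refine ⟨Finset.sum_nonneg fun J _ => (hδi J _).1 a, ?_⟩
      by_cases h : ∃ I : {I : G.Infoset // G.infPlayer I = j}, a ∈ G.infActions I.1
      · obtain ⟨I, ha⟩ := h
        rw [happ I ha, ← (hδi I (G.ownRec πi I)).2.1]
        exact Finset.single_le_sum (fun b _ => (hδi I _).1 b) ha
      · push Not at h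
        rw [inducedStrat, Finset.sum_eq_zero fun J _ => (hδi J _).2.2 a (h J)]
        exact zero_le_one
    · rw [Function.update_of_ne hj]
      exact hβ'.1 j a
  · intro I
    by_cases hI : G.infPlayer I = i
    · rw [hI, Function.update_self, ← (hδi ⟨I, hI⟩ (G.ownRec πi ⟨I, hI⟩)).2.1]
      exact Finset.sum_congr rfl fun a ha => happ ⟨I, hI⟩ ha
    · rw [Function.update_of_ne hI]
      exact hβ'.2 I

lemma respects_update_inducedStrat (G : EFG n) {η : G.Action → ℝ}
    {β' : Fin n → G.Action → ℝ} (hβ' : G.Respects η β') {i : Fin n} {δi : G.ExtBehavior i}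
    (hzero : ∀ I r a, a ∉ G.infActions I.1 → δi I r a = 0)
    (hδi : ∀ (I : {I : G.Infoset // G.infPlayer I = i}) (r : G.RecInfo I.1),
      ∀ a ∈ G.infActions I.1, η a ≤ δi I r a) (πi : G.PureStrat i) :
    G.Respects η (Function.update β' i (G.inducedStrat δi πi)) := by
  intro I a ha
  by_cases hI : G.infPlayer I = i
  · rw [hI, Function.update_self, G.inducedStrat_apply hzero πi ⟨I, hI⟩ ha]
    exact hδi ⟨I, hI⟩ _ a ha
  · rw [Function.update_of_ne hI]
    exact hβ' I a ha

lemma extRespects_blendRec (G : EFG n) {η : G.Action → ℝ} {β β' : Fin n → G.Action → ℝ}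
    {c : G.Infoset → ℝ} (hc0 : ∀ I, 0 ≤ c I)
    (hc : ∀ I, ∀ a ∈ G.infActions I,
      c I * β (G.infPlayer I) a ≤ β' (G.infPlayer I) a - η a) :
    G.ExtRespects η (G.blendRec β β' c) := by
  rintro _ ⟨I, rfl⟩ r a ha
  rw [blendRec, if_pos ha]
  have h := hc I a ha
  have hite : 0 ≤ c I * (if a = (r ⟨I, rfl, Or.inl rfl⟩).1 then 1 else 0) := by
    split_ifs <;> simp [hc0 I]
  linarith

lemma isExtBehavior_blendRec (G : EFG n) {η : G.Action → ℝ} (hη : ∀ a, 0 ≤ η a)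
    {β β' : Fin n → G.Action → ℝ} (hβ : G.IsBehavior β) (hβ' : G.IsBehavior β')
    {c : G.Infoset → ℝ} (hres : G.ExtRespects η (G.blendRec β β' c)) :
    G.IsExtBehavior (G.blendRec β β' c) := by
  intro i I r
  refine ⟨fun a => ?_, ?_, fun a ha => if_neg ha⟩
  · by_cases ha : a ∈ G.infActions I.1
    · exact (hη a).trans (hres i I r a ha)
    · exact (if_neg ha).ge
  · obtain ⟨I, rfl⟩ := I
    have hsel : ∑ a ∈ G.infActions I,
        (if a = (r ⟨I, rfl, Or.inl rfl⟩).1 then (1 : ℝ) else 0) = 1 := by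
      rw [Finset.sum_ite_eq', if_pos (r ⟨I, rfl, Or.inl rfl⟩).2]
    calc ∑ a ∈ G.infActions I, G.blendRec β β' c _ ⟨I, rfl⟩ r a
        = ∑ a ∈ G.infActions I,
            (c I * (if a = (r ⟨I, rfl, Or.inl rfl⟩).1 then 1 else 0) +
              (β' (G.infPlayer I) a - c I * β (G.infPlayer I) a)) :=
          Finset.sum_congr rfl fun a ha => if_pos ha
      _ = 1 := by
          rw [Finset.sum_add_distrib, Finset.sum_sub_distrib, ← Finset.mul_sum,
            ← Finset.mul_sum, hsel, hβ.2 I, hβ'.2 I]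
          ring

/-- Perturbed equilibria of `Γ` induce perturbed equilibria of the extended game. -/
lemma extIsPertNE_blendRec (G : EFG n) {η : G.Action → ℝ} (hη : ∀ a, 0 ≤ η a)
    {β β' : Fin n → G.Action → ℝ} (hβ : G.IsBehavior β) (hβ' : G.IsPertNE η β')
    {c : G.Infoset → ℝ} (hc0 : ∀ I, 0 ≤ c I)
    (hc : ∀ I, ∀ a ∈ G.infActions I,
      c I * β (G.infPlayer I) a ≤ β' (G.infPlayer I) a - η a) :
    G.ExtIsPertNE (G.prodDist β) η (G.blendRec β β' c) := by
  have hres := G.extRespects_blendRec hc0 hc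
  refine ⟨G.isExtBehavior_blendRec hη hβ hβ'.1 hres, hres, fun i δi hbeh hresp => ?_⟩
  have hbi := hbeh i
  have hri := hresp i
  rw [Function.update_self] at hbi hri
  have hzero := fun I r => (hbi I r).2.2
  rw [G.extEU_blendRec hβ, G.extEU_update_blendRec hβ β' c i hzero]
  calc ∑ πi : G.PureStrat i, G.pureWeight (β i) πi *
        G.EU i (Function.update β' i (G.inducedStrat δi πi))
      ≤ ∑ πi : G.PureStrat i, G.pureWeight (β i) πi * G.EU i β' :=
        Finset.sum_le_sum fun πi _ => mul_le_mul_of_nonneg_left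
          (hβ'.2.2 i _ (G.isBehavior_update_inducedStrat hβ'.1 hbi πi)
            (G.respects_update_inducedStrat hβ'.2.1 hzero hri πi))
          (G.pureWeight_nonneg hβ πi)
    _ = G.EU i β' := by rw [← Finset.sum_mul, G.sum_pureWeight hβ, one_mul]

/-! ### Passage to the limit -/

lemma isBehavior_of_tendsto (G : EFG n) {β : Fin n → G.Action → ℝ}
    {βs : ℕ → Fin n → G.Action → ℝ} (h : ∀ t, G.IsBehavior (βs t))
    (hlim : ∀ i a, Tendsto (fun t => βs t i a) atTop (nhds (β i a))) : G.IsBehavior β :=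
  ⟨fun i a => ⟨ge_of_tendsto' (hlim i a) fun t => ((h t).1 i a).1,
    le_of_tendsto' (hlim i a) fun t => ((h t).1 i a).2⟩, fun I =>
    tendsto_nhds_unique (tendsto_finsetSum _ fun a _ => hlim (G.infPlayer I) a)
      (by simp only [(h _).2 I, tendsto_const_nhds])⟩

/-- A weight in `[0, 1]` by which the distribution `p` on the actions of `I` can be scaled
to lie below `q`. -/
def scaleWeight (G : EFG n) (p q : G.Action → ℝ) (I : G.Infoset) : ℝ :=
  ∏ a ∈ G.infActions I, if p a = 0 then 1 else min 1 (q a / p a)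

lemma scaleFactor_nonneg {x y : ℝ} (hx : 0 ≤ x) (hy : 0 ≤ y) :
    0 ≤ if x = 0 then 1 else min 1 (y / x) := by
  split_ifs
  · exact zero_le_one
  · exact le_min zero_le_one (div_nonneg hy hx)

lemma scaleWeight_nonneg (G : EFG n) {p q : G.Action → ℝ} {I : G.Infoset}
    (hp : ∀ a ∈ G.infActions I, 0 ≤ p a) (hq : ∀ a ∈ G.infActions I, 0 ≤ q a) :
    0 ≤ G.scaleWeight p q I :=
  Finset.prod_nonneg fun a ha => scaleFactor_nonneg (hp a ha) (hq a ha)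

lemma scaleWeight_mul_le (G : EFG n) {p q : G.Action → ℝ} {I : G.Infoset}
    (hp : ∀ a ∈ G.infActions I, 0 ≤ p a) (hq : ∀ a ∈ G.infActions I, 0 ≤ q a)
    {a : G.Action} (ha : a ∈ G.infActions I) : G.scaleWeight p q I * p a ≤ q a := by
  by_cases h0 : p a = 0
  · simpa [h0] using hq a ha
  have hnonneg : ∀ b ∈ G.infActions I, 0 ≤ if p b = 0 then 1 else min 1 (q b / p b) :=
    fun b hb => scaleFactor_nonneg (hp b hb) (hq b hb)
  have hle : G.scaleWeight p q I ≤ q a / p a := by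
    rw [scaleWeight, ← Finset.mul_prod_erase _ _ ha]
    refine (mul_le_of_le_one_right (hnonneg a ha) ?_).trans ?_
    · refine Finset.prod_le_one (fun b hb => hnonneg b (Finset.mem_of_mem_erase hb))
        fun b _ => ?_
      split_ifs
      · exact le_rfl
      · exact min_le_left _ _
    · rw [if_neg h0]
      exact min_le_right _ _
  rwa [← le_div_iff₀ ((hp a ha).lt_of_ne' h0)]

lemma tendsto_scaleWeight (G : EFG n) {p : G.Action → ℝ} {q : ℕ → G.Action → ℝ}
    (I : G.Infoset) (h : ∀ a, Tendsto (fun t => q t a) atTop (nhds (p a))) :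
    Tendsto (fun t => G.scaleWeight p (q t) I) atTop (nhds 1) := by
  rw [← Finset.prod_const_one (s := G.infActions I)]
  refine tendsto_finsetProd _ fun a _ => ?_
  by_cases h0 : p a = 0
  · simp only [if_pos h0, tendsto_const_nhds]
  · simp only [if_neg h0]
    simpa [h0] using (tendsto_const_nhds (x := (1 : ℝ))).min ((h a).div_const (p a))

lemma tendsto_blendRec (G : EFG n) {β : Fin n → G.Action → ℝ}
    {βs : ℕ → Fin n → G.Action → ℝ} {c : ℕ → G.Infoset → ℝ}
    (hβs : ∀ i a, Tendsto (fun t => βs t i a) atTop (nhds (β i a)))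
    (hc : ∀ I, Tendsto (fun t => c t I) atTop (nhds 1)) :
    Tendsto (fun t => G.blendRec β (βs t) (c t)) atTop (nhds G.followRec) := by
  refine tendsto_pi_nhds.2 fun i => tendsto_pi_nhds.2 fun I => tendsto_pi_nhds.2 fun r =>
    tendsto_pi_nhds.2 fun a => ?_
  simp only [blendRec, followRec]
  by_cases ha : a ∈ G.infActions I.1
  · simp only [if_pos ha]
    simpa using ((hc I.1).mul_const
      (if a = (r ⟨I.1, rfl, Or.inl rfl⟩).1 then (1 : ℝ) else 0)).add
        ((hβs i a).sub ((hc I.1).mul_const (β i a)))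
  · have hne : a ≠ (r ⟨I.1, rfl, Or.inl rfl⟩).1 := fun h => ha (h ▸ Subtype.prop _)
    simp only [if_neg ha, if_neg hne, tendsto_const_nhds]

end EFG

/-- Any perfect equilibrium of `Γ` induces (as a product
distribution) an extensive-form perfect correlated equilibrium of `Γ`;
in particular `PE ⊆ EFPCE` and every finite EFG with perfect recall admits an EFPCE. -/
theorem pe_prodDist_isEFPCE {n : ℕ} (G : EFG n) (β : Fin n → G.Action → ℝ)
    (hβ : G.IsPE β) : G.IsEFPCE (G.prodDist β) := by
  obtain ⟨η, hη, hη0, βs, hNE, hcl⟩ := hβ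
  obtain ⟨φ, hφ, hlim⟩ := hcl.tendsto_subseq
  have hlim' : ∀ i a, Tendsto (fun t => βs (φ t) i a) atTop (nhds (β i a)) := fun i a =>
    tendsto_pi_nhds.1 (tendsto_pi_nhds.1 hlim i) a
  have hη0' : ∀ a, Tendsto (fun t => η (φ t) a) atTop (nhds 0) := fun a =>
    (hη0 a).comp hφ.tendsto_atTop
  have hbeh : G.IsBehavior β := G.isBehavior_of_tendsto (fun t => (hNE (φ t)).1) hlim'
  let slack : ℕ → G.Infoset → G.Action → ℝ := fun t I a =>
    βs (φ t) (G.infPlayer I) a - η (φ t) a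
  let c : ℕ → G.Infoset → ℝ := fun t I => G.scaleWeight (β (G.infPlayer I)) (slack t I) I
  have hp : ∀ I, ∀ a ∈ G.infActions I, 0 ≤ β (G.infPlayer I) a := fun I a _ =>
    (hbeh.1 _ a).1
  have hq : ∀ t I, ∀ a ∈ G.infActions I, 0 ≤ slack t I a := fun t I a ha =>
    sub_nonneg.2 ((hNE (φ t)).2.1 I a ha)
  refine ⟨G.isDistribution_prodDist hbeh, fun t => η (φ t), fun t => hη (φ t), hη0',
    fun t => G.blendRec β (βs (φ t)) (c t), fun t => ?_, ?_⟩
  · exact G.extIsPertNE_blendRec (fun a => ((hη (φ t)).1 a).1.le) hbeh (hNE (φ t))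
      (fun I => G.scaleWeight_nonneg (hp I) (hq t I))
      fun I a ha => G.scaleWeight_mul_le (hp I) (hq t I) ha
  · refine (G.tendsto_blendRec hlim' fun I => G.tendsto_scaleWeight I fun a => ?_).mapClusterPt
    simpa using (hlim' (G.infPlayer I) a).sub (hη0' a)
end
end

section
/- There exists a finite n-player extensive-form game Γ with imperfect information and perfect recall and a Nash equilibrium behavior strategy profile {β_i}_{i∈N} of Γ such that the induced product distribution μ ∈ Δ_Π, defined by μ(π) = ∏_{i∈N} ∏_{I∈𝓘_i} β_i(π_i(I)) for all π ∈ Π, is not an extensive-form perfect correlated equilibrium of Γ. In particular, NE ⊄ EFPCE. -/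
open scoped BigOperators Classical
open Filter

noncomputable section

namespace CoordinationGame

/-- The actions of the player moving at infoset `I`. -/
def moves (I : Fin 2) : Finset (Fin 2 × Bool) := {(I, true), (I, false)}

/-- The nodes of the simultaneous-move game, player `0` being written first. -/
def nodes : Finset (List (Fin 2 × Bool)) :=
  {[], [(0, true)], [(0, false)],
    [(0, true), (1, true)], [(0, true), (1, false)],
    [(0, false), (1, true)], [(0, false), (1, false)]}

/-- The infoset of a node: player `1` does not observe the move of player `0`. -/
def control : List (Fin 2 × Bool) → Option (Fin 2)
  | [] => some 0
  | [_] => some 1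
  | _ => none

/-- The actions available at a node. -/
def available (h : List (Fin 2 × Bool)) : Finset (Fin 2 × Bool) :=
  (control h).elim ∅ moves

/-- The two-player simultaneous-move game in which both players get `1` if both choose `true`,
and `0` otherwise. -/
abbrev game : EFG 2 where
  Action := Fin 2 × Bool
  Infoset := Fin 2
  H := nodes
  root_mem := by simp [nodes]
  prefix_closed := by
    intro h hh h' hp
    have key : ∀ h ∈ nodes, ∀ h' ∈ h.inits, h' ∈ nodes := by decide
    exact key h hh h' ((List.mem_inits _ _).2 hp)
  avail := available
  child_iff := by decide
  ctrl := control
  infPlayer := id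
  infActions := moves
  infActions_nonempty := by decide
  ctrl_actions := by
    intro h _ I hI
    simp [available, hI]
  infActions_disjoint := by decide
  chanceProb := fun _ _ => 0
  chance_pos := by
    intro h _ ha hc
    simp [available, hc] at ha
  chance_sum := by
    intro h _ ha hc
    simp [available, hc] at ha
  util := fun _ z => if z = [(0, true), (1, true)] then 1 else 0
  ownSeq := fun _ => []
  perfect_recall := by
    intro I h hh hc
    rw [List.filter_eq_nil_iff]
    have key : ∀ I : Fin 2, ∀ h ∈ nodes, control h = some I → ∀ a ∈ h, a ∉ moves I := by
      decide
    intro a ha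
    simpa using key I h hh hc a ha

/-- The profile in which both players choose `false`. -/
def allFalse : Fin 2 → game.Action → ℝ := fun _ a => if a.2 = true then 0 else 1

/-- The pure profile in which both players choose `false`. -/
def pureFalse : game.Profile := fun _ J => ⟨(J.1, false), by simp [game, moves]⟩

lemma sum_terminal (f : List game.Action → ℝ) (i : Fin 2) :
    ∑ z ∈ game.terminalSet, f z * game.util i z = f [(0, true), (1, true)] := by
  rw [Finset.sum_eq_single ([(0, true), (1, true)] : List (Fin 2 × Bool))]
  · simp [game]
  · intro z _ hz
    simp only
    rw [if_neg hz, mul_zero]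
  · intro h
    have hmem : ([(0, true), (1, true)] : List (Fin 2 × Bool)) ∈ nodes := by decide
    exact (h (Finset.mem_filter.2 ⟨hmem, rfl⟩)).elim

lemma EU_eq (i : Fin 2) (β : Fin 2 → game.Action → ℝ) :
    game.EU i β = β 0 (0, true) * β 1 (1, true) := by
  rw [EFG.EU, sum_terminal]
  simp [EFG.reach, EFG.reachAux, game, control]

lemma allFalse_isNE : game.IsNE allFalse := by
  refine ⟨⟨fun i a => ?_, fun I => ?_⟩, fun i βi _ => ?_⟩
  · unfold allFalse
    split_ifs <;> norm_num
  · simp [game, moves, allFalse]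
  · rw [EU_eq, EU_eq]
    fin_cases i <;> simp [allFalse]

lemma prodDist_pureFalse : game.prodDist allFalse pureFalse = 1 :=
  Finset.prod_eq_one fun _ _ => Finset.prod_eq_one fun _ _ => by simp [allFalse, pureFalse]

lemma prodDist_eq_zero {π : game.Profile} (h : π ≠ pureFalse) :
    game.prodDist allFalse π = 0 := by
  obtain ⟨i, hi⟩ := Function.ne_iff.1 h
  obtain ⟨J, hJ⟩ := Function.ne_iff.1 hi
  refine Finset.prod_eq_zero (Finset.mem_univ i) (Finset.prod_eq_zero (Finset.mem_univ J) ?_)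
  have hmem : (π i J).1 = (J.1, true) ∨ (π i J).1 = (J.1, false) := by
    simpa [game, moves] using (π i J).2
  rcases hmem with h1 | h1
  · rw [h1]
    simp [allFalse]
  · exact absurd (Subtype.ext h1) hJ

/-- The recommendation received by player `I` when both are told to choose `false`. -/
abbrev recFalse (I : Fin 2) : game.RecInfo I := game.recOf pureFalse I

lemma extEU_eq (i : Fin 2) (δ : ∀ i, game.ExtBehavior i) :
    game.extEU (game.prodDist allFalse) i δ =
      δ 0 ⟨(0 : Fin 2), rfl⟩ (recFalse 0) (0, true) *
        δ 1 ⟨(1 : Fin 2), rfl⟩ (recFalse 1) (1, true) := by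
  rw [EFG.extEU, Finset.sum_eq_single pureFalse]
  · rw [prodDist_pureFalse, one_mul, sum_terminal]
    simp only [EFG.extReachAux, mul_one]
    rfl
  · intro π _ h
    rw [prodDist_eq_zero h, zero_mul]
  · exact fun h => absurd (Finset.mem_univ _) h

/-- Player `0` chooses `true` as often as the lower bounds `η` allow. -/
def trueUpTo (η : game.Action → ℝ) : game.ExtBehavior 0 := fun _ _ a =>
  if a = (0, true) then 1 - η (0, false) else if a = (0, false) then η (0, false) else 0

lemma one_sub_le_of_extIsPertNE {η : game.Action → ℝ} (hη : game.IsLowerBound η)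
    {δ : ∀ i, game.ExtBehavior i} (hδ : game.ExtIsPertNE (game.prodDist allFalse) η δ) :
    1 - η (0, false) ≤ δ 0 ⟨(0 : Fin 2), rfl⟩ (recFalse 0) (0, true) := by
  obtain ⟨hbeh, hresp, hopt⟩ := hδ
  have hsum : η (0, true) + η (0, false) < 1 := by
    simpa [game, moves] using hη.2 (0 : Fin 2)
  have hfalse := hη.1 (0, false)
  have hpos : 0 < δ 1 ⟨(1 : Fin 2), rfl⟩ (recFalse 1) (1, true) :=
    (hη.1 (1, true)).1.trans_le
      (hresp 1 ⟨(1 : Fin 2), rfl⟩ (recFalse 1) (1, true) (by simp [game, moves]))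
  have hdev := hopt 0 (trueUpTo η) ?_ ?_
  · rw [extEU_eq, extEU_eq] at hdev
    have := le_of_mul_le_mul_right hdev hpos
    simpa [trueUpTo] using this
  · intro i I r
    by_cases hi : i = 0
    · subst hi
      obtain ⟨I, rfl : I = (0 : Fin 2)⟩ := I
      rw [Function.update_self]
      refine ⟨fun a => ?_, ?_, fun a ha => ?_⟩
      · unfold trueUpTo
        split_ifs <;> linarith [hfalse.1, hfalse.2]
      · simp [trueUpTo, game, moves]
      · have ha' : a ≠ (0, true) ∧ a ≠ (0, false) := by
          simpa [game, moves] using ha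
        simp [trueUpTo, ha'.1, ha'.2]
    · rw [Function.update_of_ne hi]
      exact hbeh i I r
  · intro i I r a ha
    by_cases hi : i = 0
    · subst hi
      obtain ⟨I, rfl : I = (0 : Fin 2)⟩ := I
      rw [Function.update_self]
      have ha' : a = (0, true) ∨ a = (0, false) := by
        simpa [game, moves] using ha
      rcases ha' with rfl | rfl
      · simp only [trueUpTo, if_true]
        linarith
      · simp [trueUpTo]
    · rw [Function.update_of_ne hi]
      exact hresp i I r a ha

lemma not_isEFPCE : ¬ game.IsEFPCE (game.prodDist allFalse) := by
  rintro ⟨-, η, hη, hη0, δs, hδs, hcl⟩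
  let F : (∀ i, game.ExtBehavior i) → ℝ :=
    fun δ => δ 0 ⟨(0 : Fin 2), rfl⟩ (recFalse 0) (0, true)
  have hF : Continuous F := by fun_prop
  have hF0 : F game.followRec = 0 := by
    simp [F, EFG.followRec, EFG.recOf, pureFalse]
  have hfreq : ∃ᶠ t in atTop, F (δs t) < 1 / 2 :=
    hcl.frequently (hF.continuousAt.eventually_lt_const (by rw [hF0]; norm_num))
  have hev : ∀ᶠ t in atTop, η t (0, false) < 1 / 2 :=
    (hη0 (0, false)).eventually_lt_const (by norm_num)
  obtain ⟨t, ht1, ht2⟩ := (hfreq.and_eventually hev).exists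
  have := one_sub_le_of_extIsPertNE (hη t) (hδs t)
  simp only [F] at ht1
  linarith

end CoordinationGame

/-- `NE ⊄ EFPCE`: there is a finite EFG with perfect recall and a
Nash equilibrium whose induced product distribution is not an EFPCE. -/
theorem ne_not_subset_efpce :
    ∃ (n : ℕ) (G : EFG n) (β : Fin n → G.Action → ℝ),
      G.IsNE β ∧ ¬ G.IsEFPCE (G.prodDist β) := by
  exact ⟨2, CoordinationGame.game, CoordinationGame.allFalse,
    CoordinationGame.allFalse_isNE, CoordinationGame.not_isEFPCE⟩
end
end
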